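/- Let (a_0, (a_t, a_{t-1}, …, a_1)) belong to the inductively defined collection 𝒜, with t ≥ 2. Then for every integer i with 0 ≤ i ≤ t − 2 one has the strict inequalities 0 < [a_t, a_{t-1}, …, a_{t-i}] < [a_t, a_{t-1}, …, a_1]. -/

import Mathlib

/-- Continued fraction value of a list `(a_t, a_{t-1}, …, a_1)` (head is `a_t`):
`cf [] = 0`, `cf (a :: L) = 1/(a - cf L)` (total division of `ℚ`, `1/0 = 0`).
In particular `cf [a₁] = 1/a₁`. -/
def cf : List ℚ → ℚ
  | [] => 0
  | a :: L => 1 / (a - cf L)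

/-- The inductively defined collection `𝒜` of pairs `(a₀, (a_t, …, a_1))`. -/
inductive chainSet : ℚ → List ℚ → Prop
  | base : chainSet 1 [1]
  | grow (a₀ a : ℚ) (L : List ℚ) : chainSet a₀ (a :: L) →
      chainSet (a₀ + 1) (1 :: (a + 1) :: L)
  | split (a₀ b c : ℚ) (L₁ L₂ : List ℚ) : chainSet a₀ (L₁ ++ b :: c :: L₂) →
      chainSet a₀ (L₁ ++ (b + 1) :: 1 :: (c + 1) :: L₂)

/-- All denominators occurring in the evaluation of the continued fraction are positive. -/
def cfGood : List ℚ → Prop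
  | [] => True
  | a :: L => cfGood L ∧ 0 < a - cf L

theorem cfGood_split (b c : ℚ) (L₂ : List ℚ) (h : cfGood (b :: c :: L₂)) :
    cfGood ((b + 1) :: 1 :: (c + 1) :: L₂) ∧
      cf ((b + 1) :: 1 :: (c + 1) :: L₂) = cf (b :: c :: L₂) := by
  simp only [cfGood, cf] at h ⊢
  obtain ⟨⟨h0, h1⟩, h2⟩ := h
  generalize cf L₂ = x at *
  obtain ⟨y, rfl⟩ : ∃ y, c = y + x := ⟨c - x, by ring⟩
  have hy : 0 < y := by linarith
  have e0 : y + x - x = y := by ring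
  have e1 : y + x + 1 - x = y + 1 := by ring
  rw [e0] at h2
  rw [e0, e1]
  have e2 : 1 - 1 / (y + 1) = y / (y + 1) := by field_simp; ring
  have e3 : b + 1 - 1 / (y / (y + 1)) = b - 1 / y := by field_simp; ring
  rw [e2, e3]
  exact ⟨⟨⟨⟨h0, by linarith⟩, by positivity⟩, h2⟩, rfl⟩

theorem cfGood_append (L₁ M N : List ℚ) (hN : cfGood M → cfGood N ∧ cf N = cf M)
    (h : cfGood (L₁ ++ M)) : cfGood (L₁ ++ N) ∧ cf (L₁ ++ N) = cf (L₁ ++ M) := by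
  induction L₁ with
  | nil => exact hN h
  | cons a L ih =>
    obtain ⟨h1, h2⟩ := h
    obtain ⟨g1, g2⟩ := ih h1
    have g2' : cf (L.append N) = cf (L.append M) := g2
    refine ⟨⟨g1, ?_⟩, ?_⟩
    · rw [g2']; exact h2
    · simp only [List.cons_append, cf, g2]

theorem chainSet_cfGood (a₀ : ℚ) (L : List ℚ) (hA : chainSet a₀ L) : cfGood L := by
  induction hA with
  | base => simp [cfGood, cf]
  | grow a₀ a L _ ih =>
    obtain ⟨h1, h2⟩ := ih
    have h3 : 1 / (a + 1 - cf L) < 1 := by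
      rw [div_lt_one (by linarith)]; linarith
    refine ⟨⟨h1, by linarith⟩, ?_⟩
    simp only [cf]; linarith
  | split a₀ b c L₁ L₂ _ ih =>
    exact (cfGood_append L₁ _ _ (cfGood_split b c L₂) ih).1

theorem cfGood_take (L : List ℚ) (h : cfGood L) (n : ℕ) (hn : n < L.length) :
    0 ≤ cf (L.take n) ∧ (0 < n → 0 < cf (L.take n)) ∧ cf (L.take n) < cf L := by
  induction L generalizing n with
  | nil => simp at hn
  | cons a M ih =>
    obtain ⟨h1, h2⟩ := h
    cases n with
    | zero => simp only [List.take_zero, cf]; simpa using h2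
    | succ k =>
      have hk : k < M.length := by simpa using hn
      obtain ⟨_, _, h5⟩ := ih h1 k hk
      simp only [List.take_succ_cons, cf]
      have h6 : 0 < a - cf (M.take k) := by linarith
      have h7 : 0 < 1 / (a - cf (M.take k)) := by positivity
      exact ⟨h7.le, fun _ => h7, one_div_lt_one_div_of_lt h2 (by linarith)⟩

theorem chainSet_initial_cf_lt (a₀ : ℚ) (L : List ℚ) (hA : chainSet a₀ L)
    (ht : 2 ≤ L.length) (i : ℕ) (hi : i ≤ L.length - 2) :
    0 < cf (L.take (i + 1)) ∧ cf (L.take (i + 1)) < cf L := by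
  have h := cfGood_take L (chainSet_cfGood a₀ L hA) (i + 1) (by omega)
  exact ⟨h.2.1 (by omega), h.2.2⟩
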